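/- Let X be a real vector space and let A be a nonempty convex subset of X with cor(A) ≠ ∅. Then lin(X \ lin(X \ A)) = lin(A), i.e., applying complement, algebraic closure, complement, and then algebraic closure to A yields the same set as applying algebraic closure alone. -/

import Mathlib

/-!
For convex `A`, the complement of `algLin Aᶜ` is exactly `algCor A`: if `x ∈ A` is not linearly
accessible from `Aᶜ`, then every open ray from `x` contains a point of `A`, and by convexity the
whole segment from `x` to that point lies in `A`. The theorem thus says `algLin (algCor A) = algLin A`. One
inclusion is monotonicity; the other is the accessibility lemma `smul_add_smul_mem_algCor_of_acc`:
the segment from a core point `c` to a point `x` of `algLin A` lies in `algCor A`, except possibly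
for `x` itself.
-/

/-- The algebraic interior (core) of a set `S` in a real vector space. -/
def algCor {X : Type*} [AddCommGroup X] [Module ℝ X] (S : Set X) : Set X :=
  {x | ∀ y : X, ∃ lb : ℝ, 0 < lb ∧ ∀ lam : ℝ, lam ∈ Set.Icc (0 : ℝ) lb → x + lam • y ∈ S}

/-- The algebraic closure (lin) of a set `S` in a real vector space: `S` together with
all points linearly accessible from `S`. -/
def algLin {X : Type*} [AddCommGroup X] [Module ℝ X] (S : Set X) : Set X :=
  S ∪ {xb | ∃ x ∈ S, x ≠ xb ∧
    ∀ lam : ℝ, lam ∈ Set.Ioc (0 : ℝ) 1 → lam • x + (1 - lam) • xb ∈ S}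

lemma algCor_subset {X : Type*} [AddCommGroup X] [Module ℝ X] (A : Set X) : algCor A ⊆ A := by
  intro x hx
  obtain ⟨l, hl, h⟩ := hx 0
  simpa using h 0 ⟨le_rfl, hl.le⟩

lemma algLin_mono {X : Type*} [AddCommGroup X] [Module ℝ X] {S T : Set X} (h : S ⊆ T) :
    algLin S ⊆ algLin T := by
  rintro x (hx | ⟨a, ha, hne, hs⟩)
  · exact Or.inl (h hx)
  · exact Or.inr ⟨a, h ha, hne, fun l hl => h (hs l hl)⟩

lemma compl_algLin_compl {X : Type*} [AddCommGroup X] [Module ℝ X] {A : Set X}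
    (hconv : Convex ℝ A) : (algLin Aᶜ)ᶜ = algCor A := by
  ext x
  constructor
  · intro hx y
    have hxA : x ∈ A := by
      by_contra h
      exact hx (Or.inl h)
    -- By convexity a single point of `A` on the open ray suffices.
    suffices h : ∃ l : ℝ, 0 < l ∧ x + l • y ∈ A by
      obtain ⟨l, hl, hmem⟩ := h
      refine ⟨l, hl, fun t ht => ?_⟩
      have h1 : t / l ≤ 1 := (div_le_one hl).2 ht.2
      have := hconv hxA hmem (sub_nonneg.2 h1) (div_nonneg ht.1 hl.le) (by ring)
      convert this using 1
      match_scalars <;> field_simp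
      ring
    by_cases h1 : x + y ∈ A
    · exact ⟨1, one_pos, by simpa using h1⟩
    by_contra! hno
    refine hx (Or.inr ⟨x + y, h1, fun h => h1 (by rwa [h]), fun l hl hmem => ?_⟩)
    apply hno l hl.1
    convert hmem using 1
    module
  · rintro hx (h | ⟨z, -, -, hs⟩)
    · exact h (algCor_subset A hx)
    · obtain ⟨l, hl, h⟩ := hx (z - x)
      refine hs (min l 1) ⟨lt_min hl one_pos, min_le_right _ _⟩ ?_
      convert h (min l 1) ⟨(lt_min hl one_pos).le, min_le_left _ _⟩ using 1
      module

lemma smul_add_smul_mem_algCor {X : Type*} [AddCommGroup X] [Module ℝ X] {A : Set X}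
    (hconv : Convex ℝ A) {c b : X} (hc : c ∈ algCor A) (hb : b ∈ A) {l : ℝ}
    (hl : l ∈ Set.Ioc (0 : ℝ) 1) : l • c + (1 - l) • b ∈ algCor A := by
  obtain ⟨hl0, hl1⟩ := hl
  intro y
  obtain ⟨r, hr, h⟩ := hc y
  refine ⟨l * r, mul_pos hl0 hr, fun t ht => ?_⟩
  have h1 : c + (t / l) • y ∈ A :=
    h _ ⟨div_nonneg ht.1 hl0.le, (div_le_iff₀ hl0).2 (by linarith [ht.2])⟩
  convert hconv h1 hb hl0.le (sub_nonneg.2 hl1) (by ring) using 1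
  match_scalars <;> field_simp

/-- The accessibility lemma: the endpoint `x` need not lie in `A`, only be a limit of points of `A`
along a segment. The point `l • c + (1 - l) • x` is rewritten as a combination, with the same
weights, of a point of `A` on that segment near `x` and a point near `c` that still lies in the
core. -/
lemma smul_add_smul_mem_algCor_of_acc {X : Type*} [AddCommGroup X] [Module ℝ X] {A : Set X}
    (hconv : Convex ℝ A) {c a x : X} (hc : c ∈ algCor A)
    (hs : ∀ s : ℝ, s ∈ Set.Ioc (0 : ℝ) 1 → s • a + (1 - s) • x ∈ A) {l : ℝ}
    (hl : l ∈ Set.Ioc (0 : ℝ) 1) : l • c + (1 - l) • x ∈ algCor A := by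
  obtain ⟨T, hT, h⟩ := hc (x - a)
  have hend := h T ⟨hT.le, le_rfl⟩
  obtain ⟨hl0, hl1⟩ := hl
  -- Moving from `x` towards `a` by `s` is compensated by moving `c` by `m * T` along `x - a`,
  -- where `m = (1 - l) / (2 * (1 + T))`, so that `l * (m * T) = (1 - l) * s`.
  have hm1 : (1 - l) / (2 * (1 + T)) < 1 := (div_lt_one (by positivity)).2 (by linarith)
  have hm0 : 0 ≤ (1 - l) / (2 * (1 + T)) := div_nonneg (by linarith) (by positivity)
  have hc' := smul_add_smul_mem_algCor hconv hc hend
    (l := 1 - (1 - l) / (2 * (1 + T))) ⟨by linarith, by linarith⟩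
  have hsl : l * T / (2 * (1 + T)) ≤ 1 := (div_le_one (by positivity)).2 (by nlinarith)
  have hb := hs (l * T / (2 * (1 + T))) ⟨by positivity, hsl⟩
  convert smul_add_smul_mem_algCor hconv hc' hb (l := l) ⟨hl0, hl1⟩ using 1
  match_scalars <;> field_simp <;> ring

theorem stmt11 {X : Type*} [AddCommGroup X] [Module ℝ X]
    (A : Set X) (hA : A.Nonempty) (hconv : Convex ℝ A)
    (hcor : (algCor A).Nonempty) :
    algLin (algLin Aᶜ)ᶜ = algLin A := by
  rw [compl_algLin_compl hconv]
  refine (algLin_mono (algCor_subset A)).antisymm fun x hx => ?_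
  obtain ⟨c, hc⟩ := hcor
  -- A point of `A` is covered by the degenerate choice `a = x`.
  obtain ⟨a, hs⟩ : ∃ a, ∀ s : ℝ, s ∈ Set.Ioc (0 : ℝ) 1 → s • a + (1 - s) • x ∈ A := by
    rcases hx with hx | ⟨a, -, -, hs⟩
    · refine ⟨x, fun s _ => ?_⟩
      rw [← add_smul]
      simpa using hx
    · exact ⟨a, hs⟩
  by_cases hcx : c = x
  · exact Or.inl (hcx ▸ hc)
  · exact Or.inr ⟨c, hc, hcx, fun l hl => smul_add_smul_mem_algCor_of_acc hconv hc hs hl⟩
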